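/- Second Jacobi operator on the test pair built from σ and φ (Lemma 4.1(b), flat torus case): let (u, A) be a smooth solution of the YMH equations on U and let X = (X₁, X₂) ∈ ℝ² be a constant vector field (a Killing field of the flat torus). Then, with v = (X₁ − iX₂)·σ₊ and a = (F − h)·(−X₂, X₁), one has pointwise on U: J²₁(v, a) = (|D₁u|² + |D₂u|²)·X₂ − 2·Re((X₂·D₁u − X₁·D₂u)·conj(D₁u)) and J²₂(v, a) = −(|D₁u|² + |D₂u|²)·X₁ − 2·Re((X₂·D₁u − X₁·D₂u)·conj(D₂u)). -/

import Mathlib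

open MeasureTheory Complex

noncomputable section

/-- Partial derivative in the first coordinate direction. -/
def pd1 {E : Type*} [NormedAddCommGroup E] [NormedSpace ℝ E] (f : ℝ × ℝ → E) (x : ℝ × ℝ) : E :=
  fderiv ℝ f x (1, 0)

/-- Partial derivative in the second coordinate direction. -/
def pd2 {E : Type*} [NormedAddCommGroup E] [NormedSpace ℝ E] (f : ℝ × ℝ → E) (x : ℝ × ℝ) : E :=
  fderiv ℝ f x (0, 1)

/-- First covariant derivative `D₁f = ∂₁f − iA₁f`. -/
def D1 (A1 : ℝ × ℝ → ℝ) (f : ℝ × ℝ → ℂ) (x : ℝ × ℝ) : ℂ :=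
  pd1 f x - Complex.I * (A1 x) * f x

/-- Second covariant derivative `D₂f = ∂₂f − iA₂f`. -/
def D2 (A2 : ℝ × ℝ → ℝ) (f : ℝ × ℝ → ℂ) (x : ℝ × ℝ) : ℂ :=
  pd2 f x - Complex.I * (A2 x) * f x

/-- Curvature function `F = ∂₁A₂ − ∂₂A₁`. -/
def curv (A1 A2 : ℝ × ℝ → ℝ) (x : ℝ × ℝ) : ℝ := pd1 A2 x - pd2 A1 x

/-- `h = (1 − |u|²)/(2ε²)`. -/
def hfun (ε : ℝ) (u : ℝ × ℝ → ℂ) (x : ℝ × ℝ) : ℝ := (1 - ‖u x‖ ^ 2) / (2 * ε ^ 2)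

/-- `σ₊ = D₁u + iD₂u`. -/
def sigP (u : ℝ × ℝ → ℂ) (A1 A2 : ℝ × ℝ → ℝ) (x : ℝ × ℝ) : ℂ :=
  D1 A1 u x + Complex.I * D2 A2 u x

/-- `σ₋ = D₁u − iD₂u`. -/
def sigM (u : ℝ × ℝ → ℂ) (A1 A2 : ℝ × ℝ → ℝ) (x : ℝ × ℝ) : ℂ :=
  D1 A1 u x - Complex.I * D2 A2 u x

/-- The Yang--Mills--Higgs energy over the fundamental domain `[0,1]²`. -/
def energy (ε : ℝ) (u : ℝ × ℝ → ℂ) (A1 A2 : ℝ × ℝ → ℝ) : ℝ :=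
  ∫ x in Set.Icc (0:ℝ) 1 ×ˢ Set.Icc (0:ℝ) 1,
    (ε ^ 2 * curv A1 A2 x ^ 2 + ‖D1 A1 u x‖ ^ 2 + ‖D2 A2 u x‖ ^ 2
      + (1 - ‖u x‖ ^ 2) ^ 2 / (4 * ε ^ 2))

/-- `ℤ²`-periodicity. -/
def Periodic2 {E : Type*} (f : ℝ × ℝ → E) : Prop :=
  ∀ x : ℝ × ℝ, f (x.1 + 1, x.2) = f x ∧ f (x.1, x.2 + 1) = f x

/-- The Yang--Mills--Higgs equations on all of `ℝ²`. -/
def IsYMH (ε : ℝ) (u : ℝ × ℝ → ℂ) (A1 A2 : ℝ × ℝ → ℝ) : Prop :=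
  (∀ x, -(D1 A1 (D1 A1 u) x + D2 A2 (D2 A2 u) x) = (hfun ε u x : ℂ) * u x) ∧
  (∀ x, ε ^ 2 * pd2 (curv A1 A2) x = ((starRingEnd ℂ) (u x) * D1 A1 u x).im) ∧
  (∀ x, ε ^ 2 * pd1 (curv A1 A2) x = -((starRingEnd ℂ) (u x) * D2 A2 u x).im)

/-- The Yang--Mills--Higgs equations on an open set `U ⊆ ℝ²`. -/
def IsYMHOn (ε : ℝ) (u : ℝ × ℝ → ℂ) (A1 A2 : ℝ × ℝ → ℝ) (U : Set (ℝ × ℝ)) : Prop :=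
  (∀ x ∈ U, -(D1 A1 (D1 A1 u) x + D2 A2 (D2 A2 u) x) = (hfun ε u x : ℂ) * u x) ∧
  (∀ x ∈ U, ε ^ 2 * pd2 (curv A1 A2) x = ((starRingEnd ℂ) (u x) * D1 A1 u x).im) ∧
  (∀ x ∈ U, ε ^ 2 * pd1 (curv A1 A2) x = -((starRingEnd ℂ) (u x) * D2 A2 u x).im)

/-- Stability: nonnegative second variation of the energy along all smooth periodic
variations of the section and the connection. -/
def Stable (ε : ℝ) (u : ℝ × ℝ → ℂ) (A1 A2 : ℝ × ℝ → ℝ) : Prop :=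
  ∀ v : ℝ × ℝ → ℂ, ∀ a1 a2 : ℝ × ℝ → ℝ,
    ContDiff ℝ (⊤ : ℕ∞) v → Periodic2 v → ContDiff ℝ (⊤ : ℕ∞) a1 → Periodic2 a1 →
    ContDiff ℝ (⊤ : ℕ∞) a2 → Periodic2 a2 →
    0 ≤ iteratedDeriv 2 (fun t : ℝ =>
      energy ε (fun x => u x + t • v x)
        (fun x => A1 x + t * a1 x) (fun x => A2 x + t * a2 x)) 0

/-- First component of the second Jacobi operator `J²` of the Yang--Mills--Higgs energy. -/
def J21 (ε : ℝ) (u : ℝ × ℝ → ℂ) (A1 A2 : ℝ × ℝ → ℝ)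
    (v : ℝ × ℝ → ℂ) (a1 a2 : ℝ × ℝ → ℝ) (x : ℝ × ℝ) : ℝ :=
  ε ^ 2 * pd2 (fun y => pd1 a2 y - pd2 a1 y) x
    - (Complex.I * u x * (starRingEnd ℂ) (D1 A1 v x)).re
    - (Complex.I * v x * (starRingEnd ℂ) (D1 A1 u x)).re
    + ‖u x‖ ^ 2 * a1 x

/-- Second component of the second Jacobi operator `J²` of the Yang--Mills--Higgs energy. -/
def J22 (ε : ℝ) (u : ℝ × ℝ → ℂ) (A1 A2 : ℝ × ℝ → ℝ)
    (v : ℝ × ℝ → ℂ) (a1 a2 : ℝ × ℝ → ℝ) (x : ℝ × ℝ) : ℝ :=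
  -(ε ^ 2 * pd1 (fun y => pd1 a2 y - pd2 a1 y) x)
    - (Complex.I * u x * (starRingEnd ℂ) (D2 A2 v x)).re
    - (Complex.I * v x * (starRingEnd ℂ) (D2 A2 u x)).re
    + ‖u x‖ ^ 2 * a2 x

/-!
Writing `φ = F − h`, the YMH equations become a first-order system for `(σ₊, φ)`:
`(D₁ − iD₂)σ₊ = φ u` and `ε²(∂₁ + i∂₂)φ = ū σ₊`. For a Killing field `X`, this says exactly that
`v = X̄ σ₊`, `a = φ (−X₂, X₁)` solves the linearization at `(u, A)` of the antivortex equations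
`σ₋ = 0`, `F = −h`. On every such solution the second-order terms of `J²` cancel and
`J²₁ + iJ²₂ = −i σ̄₋ v`, which for `v = X̄ σ₊` expands to the stated formula.
-/

open scoped InnerProductSpace

section CovariantDerivative

variable {E : Type*} [NormedAddCommGroup E] [NormedSpace ℝ E]

theorem inner_eq_re_mul_re_add_im_mul_im (z w : ℂ) :
    ⟪z, w⟫_ℝ = z.re * w.re + z.im * w.im := by
  rw [Complex.inner, mul_re, conj_re, conj_im]
  ring

/-- The covariant derivative of a section `f` of a trivial Hermitian line bundle in the constant
direction `w`. The function `A` is the value of the connection form on `w`, so that `D1` and `D2`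
are by definition the cases `w = (1, 0)` and `w = (0, 1)`. -/
def covDeriv (A : E → ℝ) (w : E) (f : E → ℂ) (x : E) : ℂ :=
  fderiv ℝ f x w - I * A x * f x

theorem D1_eq_covDeriv (A : ℝ × ℝ → ℝ) : D1 A = covDeriv A (1, 0) := rfl

theorem D2_eq_covDeriv (A : ℝ × ℝ → ℝ) : D2 A = covDeriv A (0, 1) := rfl

variable {F : Type*} [NormedAddCommGroup F] [NormedSpace ℝ F] {x : E}

theorem differentiableAt_fderiv_apply {f : E → F} (hf : ContDiffAt ℝ 2 f x) (w : E) :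
    DifferentiableAt ℝ (fun y => fderiv ℝ f y w) x :=
  ((hf.fderiv_right_succ (n := 1)).differentiableAt one_ne_zero).clm_apply
    (differentiableAt_const w)

theorem fderiv_fderiv_apply_comm {f : E → F} (hf : ContDiffAt ℝ 2 f x) (w z : E) :
    fderiv ℝ (fun y => fderiv ℝ f y z) x w = fderiv ℝ (fun y => fderiv ℝ f y w) x z := by
  have hf' : DifferentiableAt ℝ (fderiv ℝ f) x :=
    (hf.fderiv_right_succ (n := 1)).differentiableAt one_ne_zero
  have hsymm : IsSymmSndFDerivAt ℝ f x := hf.isSymmSndFDerivAt (by simp)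
  simpa [fderiv_clm_apply hf' (differentiableAt_const _)] using hsymm w z

theorem differentiableAt_ofReal_comp {g : E → ℝ} (hg : DifferentiableAt ℝ g x) :
    DifferentiableAt ℝ (fun y => (g y : ℂ)) x :=
  ofRealCLM.differentiableAt.comp x hg

theorem fderiv_ofReal_comp_apply {g : E → ℝ} (hg : DifferentiableAt ℝ g x) (w : E) :
    fderiv ℝ (fun y => (g y : ℂ)) x w = fderiv ℝ g x w :=
  DFunLike.congr_fun (ofRealCLM.hasFDerivAt.comp x hg.hasFDerivAt).fderiv w

theorem differentiableAt_ofReal_sub_I_mul_ofReal {g k : E → ℝ} (hg : DifferentiableAt ℝ g x)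
    (hk : DifferentiableAt ℝ k x) :
    DifferentiableAt ℝ (fun y => (g y : ℂ) - I * (k y : ℂ)) x :=
  (differentiableAt_ofReal_comp hg).sub ((differentiableAt_ofReal_comp hk).const_mul I)

theorem fderiv_ofReal_sub_I_mul_ofReal_apply {g k : E → ℝ} (hg : DifferentiableAt ℝ g x)
    (hk : DifferentiableAt ℝ k x) (w : E) :
    fderiv ℝ (fun y => (g y : ℂ) - I * (k y : ℂ)) x w =
      fderiv ℝ g x w - I * fderiv ℝ k x w := by
  have hk' := differentiableAt_ofReal_comp hk
  rw [fderiv_fun_sub (differentiableAt_ofReal_comp hg) (hk'.const_mul I),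
    fderiv_const_mul hk']
  simp only [sub_apply, smul_apply, smul_eq_mul, fderiv_ofReal_comp_apply hg,
    fderiv_ofReal_comp_apply hk]

theorem differentiableAt_covDeriv {A : E → ℝ} {f : E → ℂ} (hA : DifferentiableAt ℝ A x)
    (hf : ContDiffAt ℝ 2 f x) (w : E) : DifferentiableAt ℝ (covDeriv A w f) x :=
  (differentiableAt_fderiv_apply hf w).sub
    (((differentiableAt_ofReal_comp hA).const_mul I).mul (hf.differentiableAt two_ne_zero))

theorem covDeriv_add (A : E → ℝ) (w : E) {f g : E → ℂ} (hf : DifferentiableAt ℝ f x)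
    (hg : DifferentiableAt ℝ g x) :
    covDeriv A w (fun y => f y + g y) x = covDeriv A w f x + covDeriv A w g x := by
  simp only [covDeriv, fderiv_fun_add hf hg, add_apply]
  ring

theorem covDeriv_mul (A : E → ℝ) (w : E) {c f : E → ℂ} (hc : DifferentiableAt ℝ c x)
    (hf : DifferentiableAt ℝ f x) :
    covDeriv A w (fun y => c y * f y) x = fderiv ℝ c x w * f x + c x * covDeriv A w f x := by
  simp only [covDeriv, fderiv_fun_mul hc hf, add_apply, smul_apply, smul_eq_mul]
  ring

theorem covDeriv_const_mul (A : E → ℝ) (w : E) (c : ℂ) {f : E → ℂ}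
    (hf : DifferentiableAt ℝ f x) :
    covDeriv A w (fun y => c * f y) x = c * covDeriv A w f x := by
  simp [covDeriv_mul A w (differentiableAt_const c) hf]

theorem fderiv_covDeriv_apply {A : E → ℝ} {f : E → ℂ} (hA : DifferentiableAt ℝ A x)
    (hf : ContDiffAt ℝ 2 f x) (w z : E) :
    fderiv ℝ (covDeriv A z f) x w = fderiv ℝ (fun y => fderiv ℝ f y z) x w
      - I * (fderiv ℝ A x w * f x + A x * fderiv ℝ f x w) := by
  have hf' := hf.differentiableAt two_ne_zero
  have hIA := (differentiableAt_ofReal_comp hA).const_mul I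
  change fderiv ℝ (fun y => fderiv ℝ f y z - I * A y * f y) x w = _
  rw [fderiv_fun_sub (differentiableAt_fderiv_apply hf z) (hIA.fun_mul hf'),
    fderiv_fun_mul hIA hf', fderiv_const_mul (differentiableAt_ofReal_comp hA)]
  simp only [sub_apply, add_apply, smul_apply, smul_eq_mul, fderiv_ofReal_comp_apply hA]
  ring

theorem covDeriv_covDeriv_sub_covDeriv_covDeriv {A B : E → ℝ} {f : E → ℂ}
    (hA : DifferentiableAt ℝ A x) (hB : DifferentiableAt ℝ B x) (hf : ContDiffAt ℝ 2 f x)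
    (w z : E) :
    covDeriv A w (covDeriv B z f) x - covDeriv B z (covDeriv A w f) x =
      -I * (fderiv ℝ B x w - fderiv ℝ A x z : ℝ) * f x := by
  rw [covDeriv, covDeriv.eq_def B z (covDeriv A w f), fderiv_covDeriv_apply hB hf,
    fderiv_covDeriv_apply hA hf, fderiv_fderiv_apply_comm hf w z, covDeriv, covDeriv]
  push_cast
  ring

theorem fderiv_inner_eq_inner_covDeriv (A : E → ℝ) (w : E) {f g : E → ℂ}
    (hf : DifferentiableAt ℝ f x) (hg : DifferentiableAt ℝ g x) :
    fderiv ℝ (fun y => ⟪f y, g y⟫_ℝ) x w =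
      ⟪f x, covDeriv A w g x⟫_ℝ + ⟪covDeriv A w f x, g x⟫_ℝ := by
  rw [fderiv_inner_apply ℝ hf hg]
  simp only [covDeriv, inner_eq_re_mul_re_add_im_mul_im, sub_re, sub_im, mul_re, mul_im, I_re, I_im,
    ofReal_re, ofReal_im]
  ring

end CovariantDerivative

section FirstOrderSystem

/-- The function `φ = F − h`, which together with `σ₊` measures the failure of the vortex
equations `σ₊ = 0`, `F = h`. -/
def curvDefect (ε : ℝ) (u : ℝ × ℝ → ℂ) (A1 A2 : ℝ × ℝ → ℝ) (x : ℝ × ℝ) : ℝ :=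
  curv A1 A2 x - hfun ε u x

variable {ε : ℝ} {u : ℝ × ℝ → ℂ} {A1 A2 : ℝ × ℝ → ℝ} {U : Set (ℝ × ℝ)} {x : ℝ × ℝ}

theorem differentiableAt_curv (hA1 : ContDiffAt ℝ 2 A1 x) (hA2 : ContDiffAt ℝ 2 A2 x) :
    DifferentiableAt ℝ (curv A1 A2) x :=
  (differentiableAt_fderiv_apply hA2 (1, 0)).sub (differentiableAt_fderiv_apply hA1 (0, 1))

theorem hfun_eq_inv_mul_one_sub_inner (ε : ℝ) (u : ℝ × ℝ → ℂ) :
    hfun ε u = fun y => (2 * ε ^ 2)⁻¹ * (1 - ⟪u y, u y⟫_ℝ) := by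
  funext y
  rw [hfun, real_inner_self_eq_norm_sq, div_eq_inv_mul]

theorem differentiableAt_hfun (ε : ℝ) (hu : DifferentiableAt ℝ u x) :
    DifferentiableAt ℝ (hfun ε u) x := by
  rw [hfun_eq_inv_mul_one_sub_inner]
  exact ((hu.inner ℝ hu).const_sub 1).const_mul _

theorem differentiableAt_curvDefect (ε : ℝ) (hu : DifferentiableAt ℝ u x)
    (hA1 : ContDiffAt ℝ 2 A1 x) (hA2 : ContDiffAt ℝ 2 A2 x) :
    DifferentiableAt ℝ (curvDefect ε u A1 A2) x :=
  (differentiableAt_curv hA1 hA2).sub (differentiableAt_hfun ε hu)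

theorem differentiableAt_sigP (hu : ContDiffAt ℝ 2 u x) (hA1 : DifferentiableAt ℝ A1 x)
    (hA2 : DifferentiableAt ℝ A2 x) : DifferentiableAt ℝ (sigP u A1 A2) x :=
  (differentiableAt_covDeriv hA1 hu (1, 0)).add
    ((differentiableAt_covDeriv hA2 hu (0, 1)).const_mul I)

theorem sq_mul_fderiv_hfun (hε : ε ≠ 0) (A : ℝ × ℝ → ℝ) (w : ℝ × ℝ)
    (hu : DifferentiableAt ℝ u x) :
    ε ^ 2 * fderiv ℝ (hfun ε u) x w = -⟪u x, covDeriv A w u x⟫_ℝ := by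
  rw [hfun_eq_inv_mul_one_sub_inner, fderiv_const_mul ((hu.inner ℝ hu).const_sub 1),
    fderiv_const_sub, smul_apply, neg_apply, fderiv_inner_eq_inner_covDeriv A w hu hu,
    real_inner_comm, smul_eq_mul]
  field_simp
  ring

theorem covDeriv_sigP (A : ℝ × ℝ → ℝ) (w : ℝ × ℝ) (hu : ContDiffAt ℝ 2 u x)
    (hA1 : DifferentiableAt ℝ A1 x) (hA2 : DifferentiableAt ℝ A2 x) :
    covDeriv A w (sigP u A1 A2) x =
      covDeriv A w (D1 A1 u) x + I * covDeriv A w (D2 A2 u) x := by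
  have hD1 : DifferentiableAt ℝ (D1 A1 u) x := differentiableAt_covDeriv hA1 hu (1, 0)
  have hD2 : DifferentiableAt ℝ (D2 A2 u) x := differentiableAt_covDeriv hA2 hu (0, 1)
  rw [← covDeriv_const_mul A w I hD2, ← covDeriv_add A w hD1 (hD2.const_mul I)]
  rfl

namespace IsYMHOn

theorem D1_sigP_sub_I_mul_D2_sigP (hYMH : IsYMHOn ε u A1 A2 U) (hx : x ∈ U)
    (hu : ContDiffAt ℝ 2 u x) (hA1 : DifferentiableAt ℝ A1 x) (hA2 : DifferentiableAt ℝ A2 x) :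
    D1 A1 (sigP u A1 A2) x - I * D2 A2 (sigP u A1 A2) x = curvDefect ε u A1 A2 x * u x := by
  have commutator : D1 A1 (D2 A2 u) x - D2 A2 (D1 A1 u) x = -I * curv A1 A2 x * u x :=
    covDeriv_covDeriv_sub_covDeriv_covDeriv hA1 hA2 hu (1, 0) (0, 1)
  have section_eq := hYMH.1 x hx
  have hD1 : D1 A1 (sigP u A1 A2) x = D1 A1 (D1 A1 u) x + I * D1 A1 (D2 A2 u) x :=
    covDeriv_sigP A1 (1, 0) hu hA1 hA2
  have hD2 : D2 A2 (sigP u A1 A2) x = D2 A2 (D1 A1 u) x + I * D2 A2 (D2 A2 u) x :=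
    covDeriv_sigP A2 (0, 1) hu hA1 hA2
  rw [hD1, hD2, curvDefect]
  push_cast
  linear_combination I * commutator - section_eq
    - (D2 A2 (D2 A2 u) x + curv A1 A2 x * u x) * I_sq

theorem sq_mul_pd1_curvDefect (hYMH : IsYMHOn ε u A1 A2 U) (hx : x ∈ U) (hε : ε ≠ 0)
    (hu : DifferentiableAt ℝ u x) (hA1 : ContDiffAt ℝ 2 A1 x) (hA2 : ContDiffAt ℝ 2 A2 x) :
    ε ^ 2 * pd1 (curvDefect ε u A1 A2) x = ⟪u x, sigP u A1 A2 x⟫_ℝ := by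
  have hsub : pd1 (curvDefect ε u A1 A2) x = pd1 (curv A1 A2) x - pd1 (hfun ε u) x :=
    DFunLike.congr_fun
      (fderiv_fun_sub (differentiableAt_curv hA1 hA2) (differentiableAt_hfun ε hu)) (1, 0)
  have hh : ε ^ 2 * pd1 (hfun ε u) x = -⟪u x, D1 A1 u x⟫_ℝ := sq_mul_fderiv_hfun hε A1 (1, 0) hu
  rw [hsub, mul_sub, hYMH.2.2 x hx, hh]
  simp only [sigP, inner_eq_re_mul_re_add_im_mul_im, add_re, add_im, mul_re, mul_im, conj_re,
    conj_im, I_re, I_im]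
  ring

theorem sq_mul_pd2_curvDefect (hYMH : IsYMHOn ε u A1 A2 U) (hx : x ∈ U) (hε : ε ≠ 0)
    (hu : DifferentiableAt ℝ u x) (hA1 : ContDiffAt ℝ 2 A1 x) (hA2 : ContDiffAt ℝ 2 A2 x) :
    ε ^ 2 * pd2 (curvDefect ε u A1 A2) x = ⟪I * u x, sigP u A1 A2 x⟫_ℝ := by
  have hsub : pd2 (curvDefect ε u A1 A2) x = pd2 (curv A1 A2) x - pd2 (hfun ε u) x :=
    DFunLike.congr_fun
      (fderiv_fun_sub (differentiableAt_curv hA1 hA2) (differentiableAt_hfun ε hu)) (0, 1)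
  have hh : ε ^ 2 * pd2 (hfun ε u) x = -⟪u x, D2 A2 u x⟫_ℝ := sq_mul_fderiv_hfun hε A2 (0, 1) hu
  rw [hsub, mul_sub, hYMH.2.1 x hx, hh]
  simp only [sigP, inner_eq_re_mul_re_add_im_mul_im, add_re, add_im, mul_re, mul_im, conj_re,
    conj_im, I_re, I_im]
  ring

end IsYMHOn

end FirstOrderSystem

section LinearizedAntivortex

/-- The pair `(v, a)` solves on `U` the linearization at `(u, A)` of the antivortex equations
`σ₋ = 0`, `ε²F = -(1 - |u|²)/2`. -/
structure IsLinearizedAntivortexOn (ε : ℝ) (u : ℝ × ℝ → ℂ) (A1 A2 : ℝ × ℝ → ℝ)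
    (v : ℝ × ℝ → ℂ) (a1 a2 : ℝ × ℝ → ℝ) (U : Set (ℝ × ℝ)) : Prop where
  section_eq : ∀ x ∈ U, D1 A1 v x - I * D2 A2 v x = I * (a1 x - I * a2 x) * u x
  curv_eq : ∀ x ∈ U, ε ^ 2 * curv a1 a2 x = ⟪u x, v x⟫_ℝ

variable {ε : ℝ} {u v : ℝ × ℝ → ℂ} {A1 A2 a1 a2 : ℝ × ℝ → ℝ} {U : Set (ℝ × ℝ)} {x : ℝ × ℝ}

namespace IsLinearizedAntivortexOn

theorem sq_mul_fderiv_curv (h : IsLinearizedAntivortexOn ε u A1 A2 v a1 a2 U) (hU : U ∈ nhds x)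
    (hu : DifferentiableAt ℝ u x) (hv : DifferentiableAt ℝ v x) (A : ℝ × ℝ → ℝ) (w : ℝ × ℝ) :
    ε ^ 2 * fderiv ℝ (curv a1 a2) x w =
      ⟪u x, covDeriv A w v x⟫_ℝ + ⟪covDeriv A w u x, v x⟫_ℝ := by
  have hcurv : ε ^ 2 • curv a1 a2 =ᶠ[nhds x] fun y => ⟪u y, v y⟫_ℝ :=
    Filter.mem_of_superset hU h.curv_eq
  rw [← fderiv_inner_eq_inner_covDeriv A w hu hv, ← hcurv.fderiv_eq, fderiv_const_smul_field]
  rfl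

theorem J21_eq (h : IsLinearizedAntivortexOn ε u A1 A2 v a1 a2 U) (hU : U ∈ nhds x)
    (hu : DifferentiableAt ℝ u x) (hv : DifferentiableAt ℝ v x) :
    J21 ε u A1 A2 v a1 a2 x = ⟪I * sigM u A1 A2 x, v x⟫_ℝ := by
  have hcurl : ε ^ 2 * pd2 (fun y => pd1 a2 y - pd2 a1 y) x =
      ⟪u x, D2 A2 v x⟫_ℝ + ⟪D2 A2 u x, v x⟫_ℝ :=
    h.sq_mul_fderiv_curv hU hu hv A2 (0, 1)
  have cancellation : ⟪I * u x, D1 A1 v x⟫_ℝ - ⟪u x, D2 A2 v x⟫_ℝ = ‖u x‖ ^ 2 * a1 x := by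
    have := congrArg (fun z => ⟪I * u x, z⟫_ℝ) (h.section_eq x (mem_of_mem_nhds hU))
    simp only [inner_eq_re_mul_re_add_im_mul_im, sub_re, sub_im, mul_re, mul_im, I_re, I_im,
      ofReal_re, ofReal_im, Complex.sq_norm, normSq_apply] at this ⊢
    linear_combination this
  rw [J21, hcurl, ← cancellation]
  simp only [sigM, inner_eq_re_mul_re_add_im_mul_im, sub_re, sub_im, mul_re, mul_im, conj_re,
    conj_im, I_re, I_im]
  ring

theorem J22_eq (h : IsLinearizedAntivortexOn ε u A1 A2 v a1 a2 U) (hU : U ∈ nhds x)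
    (hu : DifferentiableAt ℝ u x) (hv : DifferentiableAt ℝ v x) :
    J22 ε u A1 A2 v a1 a2 x = -⟪sigM u A1 A2 x, v x⟫_ℝ := by
  have hcurl : ε ^ 2 * pd1 (fun y => pd1 a2 y - pd2 a1 y) x =
      ⟪u x, D1 A1 v x⟫_ℝ + ⟪D1 A1 u x, v x⟫_ℝ :=
    h.sq_mul_fderiv_curv hU hu hv A1 (1, 0)
  have cancellation : ⟪u x, D1 A1 v x⟫_ℝ + ⟪I * u x, D2 A2 v x⟫_ℝ = ‖u x‖ ^ 2 * a2 x := by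
    have := congrArg (fun z => ⟪u x, z⟫_ℝ) (h.section_eq x (mem_of_mem_nhds hU))
    simp only [inner_eq_re_mul_re_add_im_mul_im, sub_re, sub_im, mul_re, mul_im, I_re, I_im,
      ofReal_re, ofReal_im, Complex.sq_norm, normSq_apply] at this ⊢
    linear_combination this
  rw [J22, hcurl, ← cancellation]
  simp only [sigM, inner_eq_re_mul_re_add_im_mul_im, sub_re, sub_im, mul_re, mul_im, conj_re,
    conj_im, I_re, I_im]
  ring

end IsLinearizedAntivortexOn

end LinearizedAntivortex

section TestPair

/-- `X = (X₁, X₂)` is a Killing field of the flat plane on `U`: the symmetric part of its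
derivative vanishes. Differentiability is required since `pd1` and `pd2` are zero by convention
where it fails. -/
structure IsKillingOn (X1 X2 : ℝ × ℝ → ℝ) (U : Set (ℝ × ℝ)) : Prop where
  differentiableAt_fst : ∀ x ∈ U, DifferentiableAt ℝ X1 x
  differentiableAt_snd : ∀ x ∈ U, DifferentiableAt ℝ X2 x
  pd1_fst : ∀ x ∈ U, pd1 X1 x = 0
  pd2_snd : ∀ x ∈ U, pd2 X2 x = 0
  pd1_snd : ∀ x ∈ U, pd1 X2 x = -pd2 X1 x

theorem isKillingOn_const (c d : ℝ) (U : Set (ℝ × ℝ)) :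
    IsKillingOn (fun _ => c) (fun _ => d) U := by
  constructor <;> simp [pd1, pd2]

/-- The section `v = X̄ σ₊` of the test pair, with `X` read as the complex number `X₁ + iX₂`. -/
def testSection (u : ℝ × ℝ → ℂ) (A1 A2 X1 X2 : ℝ × ℝ → ℝ) (x : ℝ × ℝ) : ℂ :=
  ((X1 x : ℂ) - I * (X2 x : ℂ)) * sigP u A1 A2 x

variable {ε : ℝ} {u : ℝ × ℝ → ℂ} {A1 A2 X1 X2 : ℝ × ℝ → ℝ} {U : Set (ℝ × ℝ)} {x : ℝ × ℝ}

theorem differentiableAt_testSection (hX1 : DifferentiableAt ℝ X1 x)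
    (hX2 : DifferentiableAt ℝ X2 x) (hu : ContDiffAt ℝ 2 u x)
    (hA1 : DifferentiableAt ℝ A1 x) (hA2 : DifferentiableAt ℝ A2 x) :
    DifferentiableAt ℝ (testSection u A1 A2 X1 X2) x :=
  (differentiableAt_ofReal_sub_I_mul_ofReal hX1 hX2).mul (differentiableAt_sigP hu hA1 hA2)

/-- By the Cauchy–Riemann equations `hCR₁` and `hCR₂`, `∂₁ − i∂₂` annihilates `X̄`. -/
theorem D1_testSection_sub_I_mul_D2_testSection (hX1 : DifferentiableAt ℝ X1 x)
    (hX2 : DifferentiableAt ℝ X2 x) (hCR₁ : pd1 X1 x = pd2 X2 x) (hCR₂ : pd1 X2 x = -pd2 X1 x)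
    (hu : ContDiffAt ℝ 2 u x) (hA1 : DifferentiableAt ℝ A1 x) (hA2 : DifferentiableAt ℝ A2 x) :
    D1 A1 (testSection u A1 A2 X1 X2) x - I * D2 A2 (testSection u A1 A2 X1 X2) x =
      (X1 x - I * X2 x) * (D1 A1 (sigP u A1 A2) x - I * D2 A2 (sigP u A1 A2) x) := by
  have leibniz (A : ℝ × ℝ → ℝ) (w : ℝ × ℝ) : covDeriv A w (testSection u A1 A2 X1 X2) x =
      (fderiv ℝ X1 x w - I * fderiv ℝ X2 x w) * sigP u A1 A2 x
        + (X1 x - I * X2 x) * covDeriv A w (sigP u A1 A2) x := by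
    rw [← fderiv_ofReal_sub_I_mul_ofReal_apply hX1 hX2]
    exact covDeriv_mul A w (differentiableAt_ofReal_sub_I_mul_ofReal hX1 hX2)
      (differentiableAt_sigP hu hA1 hA2)
  have antiholomorphic :
      (pd1 X1 x - I * pd1 X2 x : ℂ) - I * (pd2 X1 x - I * pd2 X2 x) = 0 := by
    rw [hCR₁, hCR₂]
    push_cast
    linear_combination ((pd2 X2 x : ℝ) : ℂ) * I_sq
  rw [D1_eq_covDeriv, D2_eq_covDeriv, leibniz, leibniz]
  simp only [pd1, pd2] at antiholomorphic
  linear_combination sigP u A1 A2 x * antiholomorphic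

theorem curv_mul_neg_mul {f : ℝ × ℝ → ℝ} (hf : DifferentiableAt ℝ f x)
    (hX1 : DifferentiableAt ℝ X1 x) (hX2 : DifferentiableAt ℝ X2 x) :
    curv (fun y => f y * -X2 y) (fun y => f y * X1 y) x =
      pd1 f x * X1 x + pd2 f x * X2 x + f x * (pd1 X1 x + pd2 X2 x) := by
  simp only [curv, pd1, pd2, fderiv_fun_mul hf hX1, fderiv_fun_mul hf hX2.fun_neg, fderiv_fun_neg,
    add_apply, smul_apply, neg_apply, smul_eq_mul]
  ring

theorem IsYMHOn.isLinearizedAntivortexOn_testPair (hYMH : IsYMHOn ε u A1 A2 U) (hε : ε ≠ 0)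
    (hX : IsKillingOn X1 X2 U) (hu : ∀ x ∈ U, ContDiffAt ℝ 2 u x)
    (hA1 : ∀ x ∈ U, ContDiffAt ℝ 2 A1 x) (hA2 : ∀ x ∈ U, ContDiffAt ℝ 2 A2 x) :
    IsLinearizedAntivortexOn ε u A1 A2 (testSection u A1 A2 X1 X2)
      (fun y => curvDefect ε u A1 A2 y * -X2 y) (fun y => curvDefect ε u A1 A2 y * X1 y) U where
  section_eq x hx := by
    have hA1' := (hA1 x hx).differentiableAt two_ne_zero
    have hA2' := (hA2 x hx).differentiableAt two_ne_zero
    have hCR : pd1 X1 x = pd2 X2 x := (hX.pd1_fst x hx).trans (hX.pd2_snd x hx).symm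
    rw [D1_testSection_sub_I_mul_D2_testSection (hX.differentiableAt_fst x hx)
        (hX.differentiableAt_snd x hx) hCR (hX.pd1_snd x hx) (hu x hx) hA1' hA2',
      hYMH.D1_sigP_sub_I_mul_D2_sigP hx (hu x hx) hA1' hA2']
    push_cast
    linear_combination (curvDefect ε u A1 A2 x * X1 x * u x : ℂ) * I_sq
  curv_eq x hx := by
    have hu' := (hu x hx).differentiableAt two_ne_zero
    have hpd1 := hYMH.sq_mul_pd1_curvDefect hx hε hu' (hA1 x hx) (hA2 x hx)
    have hpd2 := hYMH.sq_mul_pd2_curvDefect hx hε hu' (hA1 x hx) (hA2 x hx)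
    have divergence_free : pd1 X1 x + pd2 X2 x = 0 := by
      rw [hX.pd1_fst x hx, hX.pd2_snd x hx, add_zero]
    rw [curv_mul_neg_mul (differentiableAt_curvDefect ε hu' (hA1 x hx) (hA2 x hx))
        (hX.differentiableAt_fst x hx) (hX.differentiableAt_snd x hx),
      divergence_free, mul_zero, add_zero, mul_add, ← mul_assoc, ← mul_assoc, hpd1, hpd2]
    simp only [testSection, inner_eq_re_mul_re_add_im_mul_im, sub_re, sub_im, mul_re, mul_im, I_re,
      I_im, ofReal_re, ofReal_im]
    ring

theorem inner_I_mul_sigM_testSection :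
    ⟪I * sigM u A1 A2 x, testSection u A1 A2 X1 X2 x⟫_ℝ =
      (‖D1 A1 u x‖ ^ 2 + ‖D2 A2 u x‖ ^ 2) * X2 x
        - 2 * ((X2 x * D1 A1 u x - X1 x * D2 A2 u x) * (starRingEnd ℂ) (D1 A1 u x)).re := by
  simp only [sigM, testSection, sigP, inner_eq_re_mul_re_add_im_mul_im, add_re, add_im, sub_re,
    sub_im, mul_re, mul_im, conj_re, conj_im, I_re, I_im, ofReal_re, ofReal_im, Complex.sq_norm,
    normSq_apply]
  ring

theorem neg_inner_sigM_testSection :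
    -⟪sigM u A1 A2 x, testSection u A1 A2 X1 X2 x⟫_ℝ =
      -((‖D1 A1 u x‖ ^ 2 + ‖D2 A2 u x‖ ^ 2) * X1 x)
        - 2 * ((X2 x * D1 A1 u x - X1 x * D2 A2 u x) * (starRingEnd ℂ) (D2 A2 u x)).re := by
  simp only [sigM, testSection, sigP, inner_eq_re_mul_re_add_im_mul_im, add_re, add_im, sub_re,
    sub_im, mul_re, mul_im, conj_re, conj_im, I_re, I_im, ofReal_re, ofReal_im, Complex.sq_norm,
    normSq_apply]
  ring

end TestPair

theorem J2_on_test_pair_general {ε : ℝ} (hε : ε ≠ 0) {U : Set (ℝ × ℝ)} (hU : IsOpen U)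
    {u : ℝ × ℝ → ℂ} {A1 A2 X1 X2 : ℝ × ℝ → ℝ}
    (hu : ContDiffOn ℝ 2 u U) (hA1 : ContDiffOn ℝ 2 A1 U) (hA2 : ContDiffOn ℝ 2 A2 U)
    (hYMH : IsYMHOn ε u A1 A2 U) (hX : IsKillingOn X1 X2 U) {x : ℝ × ℝ} (hx : x ∈ U) :
    J21 ε u A1 A2 (testSection u A1 A2 X1 X2) (fun y => curvDefect ε u A1 A2 y * -X2 y)
        (fun y => curvDefect ε u A1 A2 y * X1 y) x =
      (‖D1 A1 u x‖ ^ 2 + ‖D2 A2 u x‖ ^ 2) * X2 x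
        - 2 * ((X2 x * D1 A1 u x - X1 x * D2 A2 u x) * (starRingEnd ℂ) (D1 A1 u x)).re ∧
    J22 ε u A1 A2 (testSection u A1 A2 X1 X2) (fun y => curvDefect ε u A1 A2 y * -X2 y)
        (fun y => curvDefect ε u A1 A2 y * X1 y) x =
      -((‖D1 A1 u x‖ ^ 2 + ‖D2 A2 u x‖ ^ 2) * X1 x)
        - 2 * ((X2 x * D1 A1 u x - X1 x * D2 A2 u x) * (starRingEnd ℂ) (D2 A2 u x)).re := by
  have contDiffAt_u (y) (hy : y ∈ U) := hu.contDiffAt (hU.mem_nhds hy)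
  have contDiffAt_A1 (y) (hy : y ∈ U) := hA1.contDiffAt (hU.mem_nhds hy)
  have contDiffAt_A2 (y) (hy : y ∈ U) := hA2.contDiffAt (hU.mem_nhds hy)
  have linearized :=
    hYMH.isLinearizedAntivortexOn_testPair hε hX contDiffAt_u contDiffAt_A1 contDiffAt_A2
  have hu' := (contDiffAt_u x hx).differentiableAt two_ne_zero
  have hv := differentiableAt_testSection (hX.differentiableAt_fst x hx)
    (hX.differentiableAt_snd x hx) (contDiffAt_u x hx)
    ((contDiffAt_A1 x hx).differentiableAt two_ne_zero)
    ((contDiffAt_A2 x hx).differentiableAt two_ne_zero)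
  exact ⟨(linearized.J21_eq (hU.mem_nhds hx) hu' hv).trans inner_I_mul_sigM_testSection,
    (linearized.J22_eq (hU.mem_nhds hx) hu' hv).trans neg_inner_sigM_testSection⟩

/-- Second Jacobi operator applied to the test pair built from `σ₊` and `φ = (F − h)`
contracted with a constant Killing field (Lemma 4.1(b), flat torus case). -/
theorem J2_on_test_pair
    (ε : ℝ) (hε : 0 < ε) (U : Set (ℝ × ℝ)) (hU : IsOpen U)
    (u : ℝ × ℝ → ℂ) (A1 A2 : ℝ × ℝ → ℝ)
    (hu : ContDiffOn ℝ (⊤ : ℕ∞) u U) (hA1 : ContDiffOn ℝ (⊤ : ℕ∞) A1 U) (hA2 : ContDiffOn ℝ (⊤ : ℕ∞) A2 U)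
    (hYMH : IsYMHOn ε u A1 A2 U)
    (X1 X2 : ℝ)
    (v : ℝ × ℝ → ℂ) (a1 a2 : ℝ × ℝ → ℝ)
    (hv : v = fun y => ((X1 : ℂ) - Complex.I * (X2 : ℂ)) * sigP u A1 A2 y)
    (ha1 : a1 = fun y => (curv A1 A2 y - hfun ε u y) * (-X2))
    (ha2 : a2 = fun y => (curv A1 A2 y - hfun ε u y) * X1) :
    ∀ x ∈ U,
      (J21 ε u A1 A2 v a1 a2 x =
        (‖D1 A1 u x‖ ^ 2 + ‖D2 A2 u x‖ ^ 2) * X2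
          - 2 * (((X2 : ℂ) * D1 A1 u x - (X1 : ℂ) * D2 A2 u x)
              * (starRingEnd ℂ) (D1 A1 u x)).re) ∧
      (J22 ε u A1 A2 v a1 a2 x =
        -((‖D1 A1 u x‖ ^ 2 + ‖D2 A2 u x‖ ^ 2) * X1)
          - 2 * (((X2 : ℂ) * D1 A1 u x - (X1 : ℂ) * D2 A2 u x)
              * (starRingEnd ℂ) (D2 A2 u x)).re) := by
  subst hv ha1 ha2
  have two_le_top : (2 : WithTop ℕ∞) ≤ (⊤ : ℕ∞) := WithTop.coe_le_coe.mpr le_top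
  exact fun x hx => J2_on_test_pair_general hε.ne' hU (hu.of_le two_le_top)
    (hA1.of_le two_le_top) (hA2.of_le two_le_top) hYMH (isKillingOn_const X1 X2 U) hx
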